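/- Let 1 < p < ∞ and w ∈ A_p, and let M be the Hardy–Littlewood maximal operator. Then there exists a constant C > 0, independent of f, a, and r, such that for every a ∈ ℝⁿ, r > 0, and f ∈ L^{p,w}_loc: ‖Mf‖_{L^{p,w}(B(a,r))} ≤ C·w(B(a,r))^{1/p}·∫_r^∞ w(B(a,s))^{-1/p} ‖f‖_{L^{p,w}(B(a,s))} ds/s. -/

import Mathlib

open MeasureTheory Metric Set
open scoped ENNReal

noncomputable section

/-- The weighted measure of a set: `w(E) = ∫_E w(x) dx`, valued in `ℝ≥0∞`. -/
def wSet {n : ℕ} (w : EuclideanSpace ℝ (Fin n) → ℝ)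
    (E : Set (EuclideanSpace ℝ (Fin n))) : ℝ≥0∞ :=
  ∫⁻ x in E, ENNReal.ofReal (w x)

/-- The weighted Lebesgue norm `‖f‖_{L^{p,w}(Ω)} = (∫_Ω |f(x)|^p w(x) dx)^{1/p}`. -/
def wLp {n : ℕ} (p : ℝ) (w f : EuclideanSpace ℝ (Fin n) → ℝ)
    (Ω : Set (EuclideanSpace ℝ (Fin n))) : ℝ≥0∞ :=
  (∫⁻ x in Ω, ENNReal.ofReal |f x| ^ p * ENNReal.ofReal (w x)) ^ (1 / p)

/-- The weighted Lebesgue norm for an `ℝ≥0∞`-valued function. -/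
def wLpE {n : ℕ} (p : ℝ) (w : EuclideanSpace ℝ (Fin n) → ℝ)
    (g : EuclideanSpace ℝ (Fin n) → ℝ≥0∞) (Ω : Set (EuclideanSpace ℝ (Fin n))) : ℝ≥0∞ :=
  (∫⁻ x in Ω, g x ^ p * ENNReal.ofReal (w x)) ^ (1 / p)

/-- The weak weighted Lebesgue norm `‖f‖_{WL^{p,w}(Ω)} = sup_{γ>0} γ·w({x ∈ Ω : |f(x)| > γ})^{1/p}`. -/
def wWeakLp {n : ℕ} (p : ℝ) (w f : EuclideanSpace ℝ (Fin n) → ℝ)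
    (Ω : Set (EuclideanSpace ℝ (Fin n))) : ℝ≥0∞ :=
  ⨆ γ : Set.Ioi (0 : ℝ),
    ENNReal.ofReal γ.1 * (wSet w {x | x ∈ Ω ∧ γ.1 < |f x|}) ^ (1 / p)

/-- The weak weighted Lebesgue norm for an `ℝ≥0∞`-valued function. -/
def wWeakLpE {n : ℕ} (p : ℝ) (w : EuclideanSpace ℝ (Fin n) → ℝ)
    (g : EuclideanSpace ℝ (Fin n) → ℝ≥0∞) (Ω : Set (EuclideanSpace ℝ (Fin n))) : ℝ≥0∞ :=
  ⨆ γ : Set.Ioi (0 : ℝ),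
    ENNReal.ofReal γ.1 * (wSet w {x | x ∈ Ω ∧ ENNReal.ofReal γ.1 < g x}) ^ (1 / p)

/-- `f ∈ L^{p,w}_loc`: `f` is measurable and `‖f‖_{L^{p,w}(B)} < ∞` on every ball. -/
def MemLocWLp {n : ℕ} (p : ℝ) (w f : EuclideanSpace ℝ (Fin n) → ℝ) : Prop :=
  Measurable f ∧ ∀ (a : EuclideanSpace ℝ (Fin n)) (r : ℝ), 0 < r → wLp p w f (ball a r) < ⊤

/-- A weight: nonnegative, measurable, locally integrable, positive a.e. -/
def IsWeight {n : ℕ} (w : EuclideanSpace ℝ (Fin n) → ℝ) : Prop :=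
  Measurable w ∧ (∀ x, 0 ≤ w x) ∧ LocallyIntegrable w volume ∧ ∀ᵐ x ∂volume, 0 < w x

/-- The Muckenhoupt class `A_p` for `1 < p`. -/
def MuckAp {n : ℕ} (p : ℝ) (w : EuclideanSpace ℝ (Fin n) → ℝ) : Prop :=
  ∃ C : ℝ, 0 < C ∧ ∀ (a : EuclideanSpace ℝ (Fin n)) (r : ℝ), 0 < r →
    ((volume (ball a r))⁻¹ * ∫⁻ x in ball a r, ENNReal.ofReal (w x)) *
      ((volume (ball a r))⁻¹ *
        ∫⁻ x in ball a r, ENNReal.ofReal (w x ^ (-(1 / (p - 1))))) ^ (p - 1) ≤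
      ENNReal.ofReal C

/-- The Muckenhoupt class `A_1`. -/
def MuckA1 {n : ℕ} (w : EuclideanSpace ℝ (Fin n) → ℝ) : Prop :=
  ∃ C : ℝ, 0 < C ∧ ∀ (a : EuclideanSpace ℝ (Fin n)) (r : ℝ), 0 < r →
    ((volume (ball a r))⁻¹ * ∫⁻ x in ball a r, ENNReal.ofReal (w x)) *
      essSup (fun x => ENNReal.ofReal (w x)⁻¹) (volume.restrict (ball a r)) ≤
      ENNReal.ofReal C

/-- The class `A_{p,q}` for `1 < p`, where `p'` is the conjugate exponent of `p`. -/
def MuckApq {n : ℕ} (p q p' : ℝ) (w : EuclideanSpace ℝ (Fin n) → ℝ) : Prop :=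
  ∃ C : ℝ, 0 < C ∧ ∀ (a : EuclideanSpace ℝ (Fin n)) (r : ℝ), 0 < r →
    ((volume (ball a r))⁻¹ * ∫⁻ x in ball a r, ENNReal.ofReal (w x ^ q)) ^ (1 / q) *
      ((volume (ball a r))⁻¹ * ∫⁻ x in ball a r, ENNReal.ofReal (w x ^ (-p'))) ^ (1 / p') ≤
      ENNReal.ofReal C

/-- The class `A_{1,q}`. -/
def MuckA1q {n : ℕ} (q : ℝ) (w : EuclideanSpace ℝ (Fin n) → ℝ) : Prop :=
  ∃ C : ℝ, 0 < C ∧ ∀ (a : EuclideanSpace ℝ (Fin n)) (r : ℝ), 0 < r →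
    ((volume (ball a r))⁻¹ * ∫⁻ x in ball a r, ENNReal.ofReal (w x ^ q)) ^ (1 / q) *
      essSup (fun x => ENNReal.ofReal (w x)⁻¹) (volume.restrict (ball a r)) ≤
      ENNReal.ofReal C

/-- The Hardy–Littlewood maximal operator. -/
def HLMax {n : ℕ} (f : EuclideanSpace ℝ (Fin n) → ℝ)
    (x : EuclideanSpace ℝ (Fin n)) : ℝ≥0∞ :=
  ⨆ r : Set.Ioi (0 : ℝ), (volume (ball x r.1))⁻¹ * ∫⁻ y in ball x r.1, ENNReal.ofReal |f y|

/-- The fractional integral operator `I_α` (applied to `|f|`, valued in `ℝ≥0∞`). -/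
def fracIntE {n : ℕ} (α : ℝ) (f : EuclideanSpace ℝ (Fin n) → ℝ)
    (x : EuclideanSpace ℝ (Fin n)) : ℝ≥0∞ :=
  ∫⁻ y, ENNReal.ofReal |f y| / ENNReal.ofReal (dist x y ^ ((n : ℝ) - α))

/-- The fractional maximal operator `M_α`. -/
def fracMax {n : ℕ} (α : ℝ) (f : EuclideanSpace ℝ (Fin n) → ℝ)
    (x : EuclideanSpace ℝ (Fin n)) : ℝ≥0∞ :=
  ⨆ r : Set.Ioi (0 : ℝ),
    (volume (ball x r.1)) ^ (α / (n : ℝ) - 1) * ∫⁻ y in ball x r.1, ENNReal.ofReal |f y|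

/-- The generalized weighted Morrey norm `‖f‖_{M^{p,w}_ψ}`. -/
def morreyNorm {n : ℕ} (p : ℝ) (w : EuclideanSpace ℝ (Fin n) → ℝ)
    (ψ : EuclideanSpace ℝ (Fin n) → ℝ → ℝ) (f : EuclideanSpace ℝ (Fin n) → ℝ) : ℝ≥0∞ :=
  ⨆ (a : EuclideanSpace ℝ (Fin n)) (r : Set.Ioi (0 : ℝ)),
    (ENNReal.ofReal (ψ a r.1))⁻¹ * wSet w (ball a r.1) ^ (-(1 / p)) * wLp p w f (ball a r.1)

/-- The generalized weighted Morrey norm for an `ℝ≥0∞`-valued function. -/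
def morreyNormE {n : ℕ} (p : ℝ) (w : EuclideanSpace ℝ (Fin n) → ℝ)
    (ψ : EuclideanSpace ℝ (Fin n) → ℝ → ℝ) (g : EuclideanSpace ℝ (Fin n) → ℝ≥0∞) : ℝ≥0∞ :=
  ⨆ (a : EuclideanSpace ℝ (Fin n)) (r : Set.Ioi (0 : ℝ)),
    (ENNReal.ofReal (ψ a r.1))⁻¹ * wSet w (ball a r.1) ^ (-(1 / p)) * wLpE p w g (ball a r.1)

/-- The generalized weighted weak Morrey norm `‖f‖_{WM^{p,w}_ψ}`. -/
def morreyWeakNorm {n : ℕ} (p : ℝ) (w : EuclideanSpace ℝ (Fin n) → ℝ)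
    (ψ : EuclideanSpace ℝ (Fin n) → ℝ → ℝ) (f : EuclideanSpace ℝ (Fin n) → ℝ) : ℝ≥0∞ :=
  ⨆ (a : EuclideanSpace ℝ (Fin n)) (r : Set.Ioi (0 : ℝ)),
    (ENNReal.ofReal (ψ a r.1))⁻¹ * wSet w (ball a r.1) ^ (-(1 / p)) * wWeakLp p w f (ball a r.1)

/-- The generalized weighted weak Morrey norm for an `ℝ≥0∞`-valued function. -/
def morreyWeakNormE {n : ℕ} (p : ℝ) (w : EuclideanSpace ℝ (Fin n) → ℝ)
    (ψ : EuclideanSpace ℝ (Fin n) → ℝ → ℝ) (g : EuclideanSpace ℝ (Fin n) → ℝ≥0∞) : ℝ≥0∞ :=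
  ⨆ (a : EuclideanSpace ℝ (Fin n)) (r : Set.Ioi (0 : ℝ)),
    (ENNReal.ofReal (ψ a r.1))⁻¹ * wSet w (ball a r.1) ^ (-(1 / p)) * wWeakLpE p w g (ball a r.1)

end

/-!
For a doubling measure, Vitali's covering lemma gives a weak type bound on the level sets of the
uncentered maximal function, and the layer cake formula turns it into strong `L^q` bounds for
`q > 1`.

The weighted bound on `L^p(w)` is Lerner's proof of Muckenhoupt's theorem. Let `σ = w^{1-p'}`, so
that `w` and `σ` are doubling by the `A_p` condition. Averaging `F = (F/σ) σ` over a ball `B` and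
using the `A_p` condition gives `(⨍_B F)^{p-1} ≤ K ⨍_B (M_σ(F/σ))^{p-1} w⁻¹ dw`, hence
`(M F)^{p-1} ≤ K M_w ((M_σ(F/σ))^{p-1} w⁻¹)`; it remains to use that `M_w` is bounded on `L^{p'}(w)`
and `M_σ` on `L^p(σ)`.

For the local estimate at `x ∈ B(a,r)`, balls of radius at most `r` only see `f` on `B(a,3r)`, and
Muckenhoupt's theorem applies. A ball of radius `t > r` containing `x` lies in `B(a,3t)`, so by
Hölder and `A_p` the average over it is at most a multiple of
`w(B(a,3t))^{-1/p} ‖f‖_{L^{p,w}(B(a,3t))}`. By doubling, for `u ≥ r` the value of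
`w(B(a,s))^{-1/p} ‖f‖_{L^{p,w}(B(a,s))}` at `s = u` is controlled by its integral against `ds/s`
over `(u, 2u)`, which is part of the tail integral; this bounds both contributions.
-/

open scoped NNReal

section Integration

variable {α : Type*} [MeasurableSpace α] {μ : Measure α} {g : α → ℝ≥0∞}

lemma mul_measure_le_of_lt_laverage {t : ℝ≥0∞} (hg : Measurable g) {B : Set α}
    (hB : MeasurableSet B) (hBtop : μ B ≠ ∞) (ht : t < ⨍⁻ y in B, g y ∂μ) :
    t * μ B ≤ 2 * μ.withDensity g (B ∩ {y | t < 2 * g y}) := by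
  have hS : MeasurableSet {y | t < 2 * g y} := measurableSet_lt measurable_const (hg.const_mul 2)
  rw [withDensity_apply _ (hB.inter hS)]
  have hmean : t * μ B ≤ ∫⁻ y in B, g y ∂μ :=
    ENNReal.mul_le_of_le_div (by simpa only [setLAverage_eq] using ht.le)
  have hsmall : 2 * ∫⁻ y in B \ {y | t < 2 * g y}, g y ∂μ ≤ t * μ B := by
    rw [← lintegral_const_mul _ hg]
    calc ∫⁻ y in B \ {y | t < 2 * g y}, 2 * g y ∂μ
        ≤ ∫⁻ _ in B \ {y | t < 2 * g y}, t ∂μ :=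
          setLIntegral_mono' (hB.diff hS) fun y hy => not_lt.1 hy.2
      _ ≤ t * μ B := by rw [setLIntegral_const]; gcongr; exact sdiff_subset
  refine (ENNReal.add_le_add_iff_right (ENNReal.mul_ne_top ht.ne_top hBtop)).1 ?_
  calc t * μ B + t * μ B ≤ 2 * ∫⁻ y in B, g y ∂μ := by rw [← two_mul]; gcongr
    _ = 2 * ∫⁻ y in B ∩ {y | t < 2 * g y}, g y ∂μ + 2 * ∫⁻ y in B \ {y | t < 2 * g y}, g y ∂μ := by
      rw [← mul_add, lintegral_inter_add_sdiff _ _ hS]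
    _ ≤ 2 * ∫⁻ y in B ∩ {y | t < 2 * g y}, g y ∂μ + t * μ B := by gcongr

lemma lintegral_Ioi_ofReal_rpow (s : ℝ) :
    ∫⁻ t in Ioi (0 : ℝ), ENNReal.ofReal (t ^ s) = ∞ := by
  by_contra h
  refine not_integrableOn_Ioi_rpow s ((lintegral_ofReal_ne_top_iff_integrable ?_ ?_).1 h)
  · exact Measurable.aestronglyMeasurable (by fun_prop)
  · filter_upwards [ae_restrict_mem measurableSet_Ioi] with t ht
    exact Real.rpow_nonneg (le_of_lt ht) s

theorem lintegral_rpow_eq_lintegral_measure_lt_mul (hg : Measurable g) {q : ℝ} (hq : 0 < q) :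
    ∫⁻ x, g x ^ q ∂μ = ENNReal.ofReal q *
      ∫⁻ t in Ioi (0 : ℝ), μ {x | ENNReal.ofReal t < g x} * ENNReal.ofReal (t ^ (q - 1)) := by
  by_cases htop : μ {x | g x = ∞} = 0
  · have hfin : ∀ᵐ x ∂μ, ENNReal.ofReal (g x).toReal = g x := by
      filter_upwards [measure_eq_zero_iff_ae_notMem.1 htop] with x hx
      exact ENNReal.ofReal_toReal hx
    calc ∫⁻ x, g x ^ q ∂μ = ∫⁻ x, ENNReal.ofReal ((g x).toReal ^ q) ∂μ := by
          refine lintegral_congr_ae (hfin.mono fun x hx => ?_)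
          dsimp only
          rw [← ENNReal.ofReal_rpow_of_nonneg ENNReal.toReal_nonneg hq.le, hx]
      _ = ENNReal.ofReal q *
            ∫⁻ t in Ioi (0 : ℝ), μ {x | t < (g x).toReal} * ENNReal.ofReal (t ^ (q - 1)) :=
          lintegral_rpow_eq_lintegral_meas_lt_mul μ (ae_of_all _ fun _ => ENNReal.toReal_nonneg)
            hg.ennreal_toReal.aemeasurable hq
      _ = _ := by
          congr 1
          refine setLIntegral_congr_fun measurableSet_Ioi fun t ht => ?_
          congr 1
          refine measure_congr (hfin.mono fun x hx => propext ?_)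
          change t < (g x).toReal ↔ ENNReal.ofReal t < g x
          rw [← ENNReal.ofReal_lt_ofReal_iff_of_nonneg (le_of_lt ht), hx]
  · have hlhs : ∫⁻ x, g x ^ q ∂μ = ∞ := by
      refine lintegral_eq_top_of_measure_eq_top_ne_zero (hg.pow_const q).aemeasurable ?_
      simpa only [ENNReal.rpow_eq_top_iff_of_pos hq] using htop
    rw [hlhs, eq_comm, ENNReal.mul_eq_top]
    refine Or.inl ⟨(ENNReal.ofReal_pos.2 hq).ne', top_unique ?_⟩
    calc ∞ = μ {x | g x = ∞} * ∫⁻ t in Ioi (0 : ℝ), ENNReal.ofReal (t ^ (q - 1)) := by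
          rw [lintegral_Ioi_ofReal_rpow, ENNReal.mul_top htop]
      _ = ∫⁻ t in Ioi (0 : ℝ), μ {x | g x = ∞} * ENNReal.ofReal (t ^ (q - 1)) :=
          (lintegral_const_mul _ (by fun_prop)).symm
      _ ≤ _ := by
          gcongr with t x
          rintro (hx : g x = ∞)
          exact hx ▸ ENNReal.ofReal_lt_top

lemma lintegral_withDensity_setOf_lt_two_mul (hg : Measurable g) {q : ℝ} (hq : 1 < q) :
    ∫⁻ t in Ioi (0 : ℝ),
      μ.withDensity g {x | ENNReal.ofReal t < 2 * g x} * ENNReal.ofReal (t ^ (q - 1 - 1)) =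
        (ENNReal.ofReal (q - 1))⁻¹ * 2 ^ (q - 1) * ∫⁻ x, g x ^ q ∂μ := by
  have hq' : 0 < q - 1 := sub_pos.2 hq
  have hofReal : ENNReal.ofReal (q - 1) ≠ 0 := (ENNReal.ofReal_pos.2 hq').ne'
  calc _ = (ENNReal.ofReal (q - 1))⁻¹ * ∫⁻ x, (2 * g x) ^ (q - 1) ∂μ.withDensity g := by
        rw [lintegral_rpow_eq_lintegral_measure_lt_mul (hg.const_mul 2) hq', ← mul_assoc,
          ENNReal.inv_mul_cancel hofReal ENNReal.ofReal_ne_top, one_mul]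
    _ = (ENNReal.ofReal (q - 1))⁻¹ * ∫⁻ x, 2 ^ (q - 1) * g x ^ q ∂μ := by
        rw [lintegral_withDensity_eq_lintegral_mul _ hg (by fun_prop)]
        congr 2 with x
        rw [Pi.mul_apply, ENNReal.mul_rpow_of_nonneg _ _ hq'.le, mul_left_comm]
        congr 1
        nth_rw 1 [← ENNReal.rpow_one (g x)]
        rw [← ENNReal.rpow_add_of_nonneg _ _ zero_le_one hq'.le, add_sub_cancel]
    _ = _ := by rw [lintegral_const_mul _ (hg.pow_const q), mul_assoc]

end Integration

section Doubling

variable {X : Type*} [PseudoMetricSpace X] [MeasurableSpace X] {μ ν : Measure X} {D : ℝ≥0}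

/-- A doubling measure with doubling constant `D`: balls have positive finite measure, and doubling
the radius multiplies the measure by at most `D`. Unlike in `IsUnifLocDoublingMeasure`, this is
required at all scales. -/
structure IsDoubling (μ : Measure X) (D : ℝ≥0) : Prop where
  measure_ball_ne_zero : ∀ (x : X) {r : ℝ}, 0 < r → μ (ball x r) ≠ 0
  measure_ball_ne_top : ∀ (x : X) (r : ℝ), μ (ball x r) ≠ ∞
  measure_ball_two_mul_le : ∀ (x : X) {r : ℝ}, 0 < r → μ (ball x (2 * r)) ≤ D * μ (ball x r)

namespace IsDoubling

lemma measure_ball_five_mul_le (hμ : IsDoubling μ D) (x : X) {r : ℝ} (hr : 0 < r) :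
    μ (ball x (5 * r)) ≤ D ^ 3 * μ (ball x r) :=
  calc μ (ball x (5 * r)) ≤ μ (ball x (2 * (2 * (2 * r)))) :=
      measure_mono (ball_subset_ball (by linarith))
    _ ≤ D * (D * (D * μ (ball x r))) := by
      grw [hμ.measure_ball_two_mul_le x (by positivity),
        hμ.measure_ball_two_mul_le x (by positivity), hμ.measure_ball_two_mul_le x hr]
    _ = D ^ 3 * μ (ball x r) := by ring

lemma sigmaFinite (hμ : IsDoubling μ D) : SigmaFinite μ := by
  rcases isEmpty_or_nonempty X with hX | ⟨⟨x⟩⟩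
  · rw [Measure.eq_zero_of_isEmpty μ]
    infer_instance
  · exact ⟨⟨⟨fun n : ℕ => ball x n, fun _ => trivial,
      fun n => (hμ.measure_ball_ne_top x n).lt_top, iUnion_ball_nat x⟩⟩⟩

variable [OpensMeasurableSpace X] {ι : Type*} {c : ι → X} {r : ι → ℝ} {t : ℝ≥0∞}

lemma mul_measure_biUnion_ball_le (hμ : IsDoubling μ D) {S : Set ι} {R : ℝ}
    (hR : ∀ i ∈ S, r i ≤ R) (hν : ∀ i, t * μ (ball (c i) (r i)) ≤ ν (ball (c i) (r i))) :
    t * μ (⋃ i ∈ S, ball (c i) (r i)) ≤ D ^ 3 * ν univ := by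
  have := hμ.sigmaFinite
  obtain ⟨u, huS, hdisj, hcover⟩ := Vitali.exists_disjoint_subfamily_covering_enlargement_ball
    {i ∈ S | 0 < r i} c r R (fun i hi => hR i hi.1) 5 (by norm_num)
  have hpos : ∀ i : u, 0 < r i := fun i => (huS i.2).2
  have hdisj' : Pairwise (Function.onFun Disjoint fun i : u => ball (c i) (r i)) :=
    hdisj.on_injective Subtype.val_injective Subtype.prop
  have hcount : u.Countable := by
    have := Measure.countable_meas_pos_of_disjoint_iUnion (μ := μ)
      (fun i : u => measurableSet_ball) hdisj'
    have huniv : {i : u | 0 < μ (ball (c i) (r i))} = univ :=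
      eq_univ_of_forall fun i => pos_iff_ne_zero.2 (hμ.measure_ball_ne_zero _ (hpos i))
    rwa [huniv, countable_univ_iff] at this
  have hsub : ⋃ i ∈ S, ball (c i) (r i) ⊆ ⋃ i ∈ u, ball (c i) (5 * r i) := by
    refine iUnion₂_subset fun i hi x hx => ?_
    obtain ⟨j, hj, hij⟩ := hcover i ⟨hi, pos_of_mem_ball hx⟩
    exact mem_biUnion hj (hij hx)
  calc t * μ (⋃ i ∈ S, ball (c i) (r i))
      ≤ t * ∑' i : u, μ (ball (c i) (5 * r i)) := by
        grw [hsub, measure_biUnion_le μ hcount]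
    _ ≤ t * ∑' i : u, D ^ 3 * μ (ball (c i) (r i)) := by
        gcongr with i
        exact hμ.measure_ball_five_mul_le _ (hpos i)
    _ = D ^ 3 * ∑' i : u, t * μ (ball (c i) (r i)) := by
        rw [ENNReal.tsum_mul_left, ENNReal.tsum_mul_left, mul_left_comm]
    _ ≤ D ^ 3 * ∑' i : u, ν (ball (c i) (r i)) := by
        gcongr with i
        exact hν i
    _ ≤ D ^ 3 * ν univ := by
        gcongr
        exact tsum_measure_le_measure_univ (fun i => measurableSet_ball.nullMeasurableSet)
          fun i j hij => (hdisj' hij).aedisjoint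

lemma mul_measure_iUnion_ball_le (hμ : IsDoubling μ D)
    (hν : ∀ i, t * μ (ball (c i) (r i)) ≤ ν (ball (c i) (r i))) :
    t * μ (⋃ i, ball (c i) (r i)) ≤ D ^ 3 * ν univ := by
  have hunion : ⋃ i, ball (c i) (r i) = ⋃ n : ℕ, ⋃ i ∈ {i | r i ≤ n}, ball (c i) (r i) := by
    ext x
    simp only [mem_iUnion, mem_ofPred_eq, exists_prop]
    exact ⟨fun ⟨i, hi⟩ => (exists_nat_ge (r i)).imp fun n hn => ⟨i, hn, hi⟩,
      fun ⟨_, i, _, hi⟩ => ⟨i, hi⟩⟩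
  have hmono : Monotone fun n : ℕ => ⋃ i ∈ {i | r i ≤ n}, ball (c i) (r i) := fun m n hmn =>
    biUnion_mono (fun i (hi : r i ≤ m) => hi.trans (mod_cast hmn)) fun _ _ => subset_rfl
  rw [hunion, hmono.measure_iUnion, ENNReal.mul_iSup]
  exact iSup_le fun n => hμ.mul_measure_biUnion_ball_le (fun _ hi => hi) hν

end IsDoubling

end Doubling

section MaximalFunction

variable {X : Type*} [PseudoMetricSpace X] [MeasurableSpace X] {μ : Measure X}
  {g : X → ℝ≥0∞} {x c : X} {r : ℝ}

/-- The uncentered Hardy–Littlewood maximal function of `g` with respect to `μ`. It dominates the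
centered one, and it is lower semicontinuous, hence measurable, for every `g`. -/
noncomputable def maximalFunction (μ : Measure X) (g : X → ℝ≥0∞) (x : X) : ℝ≥0∞ :=
  ⨆ (c : X) (r : ℝ) (_ : x ∈ ball c r), ⨍⁻ y in ball c r, g y ∂μ

lemma laverage_le_maximalFunction (hx : x ∈ ball c r) :
    ⨍⁻ y in ball c r, g y ∂μ ≤ maximalFunction μ g x :=
  le_iSup₂_of_le c r (le_iSup_of_le hx le_rfl)

lemma setOf_lt_maximalFunction (μ : Measure X) (g : X → ℝ≥0∞) (t : ℝ≥0∞) :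
    {x | t < maximalFunction μ g x} =
      ⋃ b : {b : X × ℝ // t < ⨍⁻ y in ball b.1 b.2, g y ∂μ}, ball b.1.1 b.1.2 := by
  ext x
  simp only [maximalFunction, mem_ofPred_eq, lt_iSup_iff, mem_iUnion, Subtype.exists, Prod.exists,
    exists_prop]
  exact exists₂_congr fun _ _ => and_comm

@[fun_prop]
lemma measurable_maximalFunction [OpensMeasurableSpace X] (μ : Measure X) (g : X → ℝ≥0∞) :
    Measurable (maximalFunction μ g) := by
  refine measurable_of_Ioi fun t => IsOpen.measurableSet ?_
  change IsOpen {x | t < maximalFunction μ g x}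
  rw [setOf_lt_maximalFunction]
  exact isOpen_iUnion fun _ => isOpen_ball

theorem IsDoubling.mul_measure_lt_maximalFunction_le [OpensMeasurableSpace X] {D : ℝ≥0}
    (hμ : IsDoubling μ D) (hg : Measurable g) (t : ℝ≥0∞) :
    t * μ {x | t < maximalFunction μ g x} ≤ 2 * D ^ 3 * μ.withDensity g {y | t < 2 * g y} := by
  rw [setOf_lt_maximalFunction]
  calc _ ≤ D ^ 3 * ((2 : ℝ≥0∞) • (μ.withDensity g).restrict {y | t < 2 * g y}) univ := by
        refine hμ.mul_measure_iUnion_ball_le fun b => ?_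
        rw [Measure.smul_apply, Measure.restrict_apply measurableSet_ball, smul_eq_mul]
        exact mul_measure_le_of_lt_laverage hg measurableSet_ball (hμ.measure_ball_ne_top _ _) b.2
    _ = 2 * D ^ 3 * μ.withDensity g {y | t < 2 * g y} := by
        rw [Measure.smul_apply, Measure.restrict_apply_univ, smul_eq_mul]
        ring

end MaximalFunction

section StrongType

variable {X : Type*} [PseudoMetricSpace X] [MeasurableSpace X] [OpensMeasurableSpace X]
  {μ : Measure X} {D : ℝ≥0} {q : ℝ}

lemma IsDoubling.lintegral_maximalFunction_rpow_le (hμ : IsDoubling μ D) (hq : 1 < q)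
    {g : X → ℝ≥0∞} (hg : Measurable g) :
    ∫⁻ x, maximalFunction μ g x ^ q ∂μ ≤
      ENNReal.ofReal q * (2 * D ^ 3) * ((ENNReal.ofReal (q - 1))⁻¹ * 2 ^ (q - 1)) *
        ∫⁻ x, g x ^ q ∂μ := by
  calc ∫⁻ x, maximalFunction μ g x ^ q ∂μ
      = ENNReal.ofReal q * ∫⁻ t in Ioi (0 : ℝ),
          μ {x | ENNReal.ofReal t < maximalFunction μ g x} * ENNReal.ofReal (t ^ (q - 1)) :=
        lintegral_rpow_eq_lintegral_measure_lt_mul (by fun_prop)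
          (zero_lt_one.trans hq)
    _ ≤ ENNReal.ofReal q * ∫⁻ t in Ioi (0 : ℝ), 2 * D ^ 3 *
          (μ.withDensity g {y | ENNReal.ofReal t < 2 * g y} *
            ENNReal.ofReal (t ^ (q - 1 - 1))) := by
        gcongr ENNReal.ofReal q * ?_
        refine setLIntegral_mono' measurableSet_Ioi fun t (ht : 0 < t) => ?_
        have hpow : ENNReal.ofReal (t ^ (q - 1)) =
            ENNReal.ofReal t * ENNReal.ofReal (t ^ (q - 1 - 1)) := by
          rw [← ENNReal.ofReal_mul ht.le, Real.rpow_sub_one ht.ne' (q - 1),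
            mul_div_cancel₀ _ ht.ne']
        rw [hpow, ← mul_assoc, ← mul_assoc, mul_comm (μ _)]
        gcongr ?_ * _
        exact hμ.mul_measure_lt_maximalFunction_le hg _
    _ = _ := by
        rw [lintegral_const_mul' _ _ (by finiteness),
          lintegral_withDensity_setOf_lt_two_mul hg hq]
        ring

theorem IsDoubling.exists_lintegral_maximalFunction_rpow_le (hμ : IsDoubling μ D) (hq : 1 < q) :
    ∃ C : ℝ≥0, ∀ g : X → ℝ≥0∞, Measurable g →
      ∫⁻ x, maximalFunction μ g x ^ q ∂μ ≤ C * ∫⁻ x, g x ^ q ∂μ := by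
  have := sub_pos.2 hq
  refine ⟨(ENNReal.ofReal q * (2 * D ^ 3) *
    ((ENNReal.ofReal (q - 1))⁻¹ * 2 ^ (q - 1))).toNNReal, fun g hg => ?_⟩
  rw [ENNReal.coe_toNNReal (by finiteness)]
  exact hμ.lintegral_maximalFunction_rpow_le hq hg

end StrongType

section DualWeight

variable {α : Type*} {p q : ℝ} {V : α → ℝ≥0∞}

/-- The weight `V ^ (1 - p')` dual to a weight `V` of exponent `p`, where `p'` is the conjugate
exponent of `p`, so that `1 - p' = -1 / (p - 1)`. -/
noncomputable def dualWeight (p : ℝ) (V : α → ℝ≥0∞) (x : α) : ℝ≥0∞ :=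
  V x ^ (-(1 / (p - 1)))

lemma dualWeight_eq_rpow_one_sub (hpq : p.HolderConjugate q) (V : α → ℝ≥0∞) (x : α) :
    dualWeight p V x = V x ^ (1 - q) := by
  have hexp : -(1 / (p - 1)) = 1 - q := by
    rw [neg_eq_iff_eq_neg, div_eq_iff hpq.sub_one_ne_zero]
    linear_combination -hpq.mul_eq_add
  rw [dualWeight, hexp]

lemma dualWeight_dualWeight (hpq : p.HolderConjugate q) : dualWeight q (dualWeight p V) = V := by
  funext x
  have hmul : (1 - q) * (1 - p) = 1 := by linear_combination hpq.mul_eq_add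
  rw [dualWeight_eq_rpow_one_sub hpq.symm, dualWeight_eq_rpow_one_sub hpq, ← ENNReal.rpow_mul, hmul,
    ENNReal.rpow_one]

lemma dualWeight_ne_zero (hp : 1 < p) {x : α} (hV : V x ≠ ∞) : dualWeight p V x ≠ 0 := by
  simp [dualWeight, ENNReal.rpow_eq_zero_iff, hV, hp.le]

lemma dualWeight_ne_top (hp : 1 < p) {x : α} (hV : V x ≠ 0) : dualWeight p V x ≠ ∞ := by
  simp [dualWeight, ENNReal.rpow_eq_top_iff, hV, hp.le]

variable [MeasurableSpace α] {μ : Measure α}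

@[fun_prop]
lemma measurable_dualWeight (hV : Measurable V) : Measurable (dualWeight p V) :=
  hV.pow_const _

lemma laverage_eq_mul_laverage_withDensity (hV : Measurable V) (hV0 : ∀ᵐ x ∂μ, V x ≠ 0)
    (hVtop : ∀ᵐ x ∂μ, V x ≠ ∞) {F : α → ℝ≥0∞} (hF : Measurable F) {B : Set α}
    (hB : MeasurableSet B) (hB0 : μ.withDensity V B ≠ 0) (hBtop : μ.withDensity V B ≠ ∞) :
    ⨍⁻ x in B, F x ∂μ =
      (⨍⁻ x in B, V x ∂μ) * ⨍⁻ x in B, F x * (V x)⁻¹ ∂μ.withDensity V := by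
  have hcancel : ∫⁻ x in B, F x * (V x)⁻¹ ∂μ.withDensity V = ∫⁻ x in B, F x ∂μ := by
    rw [setLIntegral_withDensity_eq_setLIntegral_mul _ hV (by fun_prop) hB]
    refine lintegral_congr_ae (ae_restrict_of_ae ?_)
    filter_upwards [hV0, hVtop] with x hx0 hxtop
    rw [Pi.mul_apply, mul_left_comm, ENNReal.mul_inv_cancel hx0 hxtop, mul_one]
  simp only [setLAverage_eq, hcancel, ENNReal.div_eq_inv_mul]
  rw [mul_assoc, ← withDensity_apply V hB, ENNReal.mul_inv_cancel_left hB0 hBtop]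

lemma lintegral_mul_inv_rpow_withDensity (hpq : p.HolderConjugate q) (hV : Measurable V)
    (hV0 : ∀ᵐ x ∂μ, V x ≠ 0) (hVtop : ∀ᵐ x ∂μ, V x ≠ ∞) {F : α → ℝ≥0∞} (hF : Measurable F) :
    ∫⁻ x, (F x * (V x)⁻¹) ^ q ∂μ.withDensity V =
      ∫⁻ x, F x ^ q ∂μ.withDensity (dualWeight p V) := by
  rw [lintegral_withDensity_eq_lintegral_mul _ hV (by fun_prop),
    lintegral_withDensity_eq_lintegral_mul _ (by fun_prop) (by fun_prop)]
  refine lintegral_congr_ae ?_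
  filter_upwards [hV0, hVtop] with x hx0 hxtop
  rw [Pi.mul_apply, Pi.mul_apply, dualWeight_eq_rpow_one_sub hpq,
    ENNReal.mul_rpow_of_nonneg _ _ hpq.symm.nonneg, mul_left_comm, mul_comm, ENNReal.inv_rpow,
    ← ENNReal.rpow_neg, sub_eq_add_neg, ENNReal.rpow_add _ _ hx0 hxtop, ENNReal.rpow_one]

lemma lintegral_rpow_le_mul_lintegral_dualWeight (hpq : p.HolderConjugate q) (hV : Measurable V)
    (hV0 : ∀ᵐ x ∂μ, V x ≠ 0) (hVtop : ∀ᵐ x ∂μ, V x ≠ ∞) {F : α → ℝ≥0∞} (hF : Measurable F) :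
    (∫⁻ x, F x ∂μ) ^ p ≤
      (∫⁻ x, F x ^ p ∂μ.withDensity V) * (∫⁻ x, dualWeight p V x ∂μ) ^ (p - 1) := by
  have hcancel : ∫⁻ x, F x ∂μ = ∫⁻ x, F x * V x ^ (1 / p) * V x ^ (-(1 / p)) ∂μ := by
    refine lintegral_congr_ae ?_
    filter_upwards [hV0, hVtop] with x hx0 hxtop
    rw [mul_assoc, ← ENNReal.rpow_add _ _ hx0 hxtop, add_neg_cancel, ENNReal.rpow_zero, mul_one]
  have hFp : ∫⁻ x, (F x * V x ^ (1 / p)) ^ p ∂μ = ∫⁻ x, F x ^ p ∂μ.withDensity V := by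
    rw [lintegral_withDensity_eq_lintegral_mul _ hV (by fun_prop)]
    refine lintegral_congr fun x => ?_
    rw [ENNReal.mul_rpow_of_nonneg _ _ hpq.nonneg, ← ENNReal.rpow_mul,
      one_div_mul_cancel hpq.ne_zero, ENNReal.rpow_one, Pi.mul_apply, mul_comm]
  have hdual : ∫⁻ x, (V x ^ (-(1 / p))) ^ q ∂μ = ∫⁻ x, dualWeight p V x ∂μ := by
    have hexp : -(1 / p) * q = 1 - q := by
      have := hpq.ne_zero
      field_simp
      linear_combination hpq.mul_eq_add
    simp only [← ENNReal.rpow_mul, hexp, dualWeight_eq_rpow_one_sub hpq]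
  have holder := ENNReal.lintegral_mul_le_Lp_mul_Lq μ hpq (f := fun x => F x * V x ^ (1 / p))
    (g := fun x => V x ^ (-(1 / p))) (by fun_prop) (by fun_prop)
  have hexp : 1 / q * p = p - 1 := by rw [one_div_mul_eq_div, hpq.div_conj_eq_sub_one]
  simp only [Pi.mul_apply, ← hcancel, hFp, hdual] at holder
  refine (ENNReal.rpow_le_rpow holder hpq.nonneg).trans_eq ?_
  rw [ENNReal.mul_rpow_of_nonneg _ _ hpq.nonneg, ← ENNReal.rpow_mul, ← ENNReal.rpow_mul,
    one_div_mul_cancel hpq.ne_zero, ENNReal.rpow_one, hexp]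

end DualWeight

section MuckenhouptWeight

variable {X : Type*} [PseudoMetricSpace X] [MeasurableSpace X]
  {μ : Measure X} {D K : ℝ≥0} {p q : ℝ} {W : X → ℝ≥0∞}

/-- A Muckenhoupt `A_p` weight with respect to `μ`, with `A_p` constant at most `K`. Values in
`ℝ≥0∞` keep the dual weight meaningful where the weight vanishes, and it is again a weight of this
kind. -/
structure IsMuckenhouptWeight (μ : Measure X) (p : ℝ) (K : ℝ≥0) (W : X → ℝ≥0∞) : Prop where
  measurable : Measurable W
  ae_ne_zero : ∀ᵐ x ∂μ, W x ≠ 0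
  lintegral_ball_ne_top : ∀ x r, ∫⁻ y in ball x r, W y ∂μ ≠ ∞
  laverage_mul_laverage_dualWeight_le : ∀ x {r : ℝ}, 0 < r →
    (⨍⁻ y in ball x r, W y ∂μ) * (⨍⁻ y in ball x r, dualWeight p W y ∂μ) ^ (p - 1) ≤ K

namespace IsMuckenhouptWeight

lemma ae_ne_top (hW : IsMuckenhouptWeight μ p K W) : ∀ᵐ x ∂μ, W x ≠ ∞ := by
  rcases isEmpty_or_nonempty X with hX | ⟨⟨x₀⟩⟩
  · exact ae_of_all _ fun x => hX.elim x
  · rw [← Measure.restrict_univ (μ := μ), ← iUnion_ball_nat x₀, ae_restrict_iUnion_iff]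
    intro n
    filter_upwards [ae_lt_top hW.measurable (hW.lintegral_ball_ne_top x₀ n)] with x hx using hx.ne

lemma withDensity_ball_ne_zero (hW : IsMuckenhouptWeight μ p K W) (hμ : IsDoubling μ D) (x : X)
    {r : ℝ} (hr : 0 < r) : μ.withDensity W (ball x r) ≠ 0 := fun h =>
  hμ.measure_ball_ne_zero x hr
    (withDensity_absolutelyContinuous' hW.measurable.aemeasurable hW.ae_ne_zero h)

variable [OpensMeasurableSpace X]

lemma withDensity_ball_ne_top (hW : IsMuckenhouptWeight μ p K W) (x : X) (r : ℝ) :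
    μ.withDensity W (ball x r) ≠ ∞ := by
  rw [withDensity_apply _ measurableSet_ball]
  exact hW.lintegral_ball_ne_top x r

lemma lintegral_ball_dualWeight_ne_top (hW : IsMuckenhouptWeight μ p K W) (hμ : IsDoubling μ D)
    (hp : 1 < p) (x : X) (r : ℝ) : ∫⁻ y in ball x r, dualWeight p W y ∂μ ≠ ∞ := by
  rcases le_or_gt r 0 with hr | hr
  · simp [ball_eq_empty.2 hr]
  · have hwB : ⨍⁻ y in ball x r, W y ∂μ ≠ 0 := by
      rw [setLAverage_eq, ← withDensity_apply _ measurableSet_ball]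
      exact ENNReal.div_ne_zero.2
        ⟨hW.withDensity_ball_ne_zero hμ x hr, hμ.measure_ball_ne_top x r⟩
    intro htop
    have hσB : ⨍⁻ y in ball x r, dualWeight p W y ∂μ = ∞ := by
      rw [setLAverage_eq, htop, ENNReal.top_div_of_ne_top (hμ.measure_ball_ne_top x r)]
    have := hW.laverage_mul_laverage_dualWeight_le x hr
    rw [hσB, ENNReal.top_rpow_of_pos (sub_pos.2 hp), ENNReal.mul_top hwB] at this
    exact ENNReal.coe_ne_top (top_unique this)

lemma dual (hW : IsMuckenhouptWeight μ p K W) (hμ : IsDoubling μ D) (hpq : p.HolderConjugate q) :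
    IsMuckenhouptWeight μ q (K ^ (q - 1)) (dualWeight p W) where
  measurable := by have := hW.measurable; fun_prop
  ae_ne_zero := hW.ae_ne_top.mono fun _ => dualWeight_ne_zero hpq.lt
  lintegral_ball_ne_top := hW.lintegral_ball_dualWeight_ne_top hμ hpq.lt
  laverage_mul_laverage_dualWeight_le x r hr := by
    have hexp : (p - 1) * (q - 1) = 1 := by linear_combination hpq.mul_eq_add
    have hq : 0 ≤ q - 1 := hpq.symm.sub_one_pos.le
    rw [dualWeight_dualWeight hpq]
    have := ENNReal.rpow_le_rpow (hW.laverage_mul_laverage_dualWeight_le x hr) hq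
    rwa [ENNReal.mul_rpow_of_nonneg _ _ hq, ← ENNReal.rpow_mul, hexp, ENNReal.rpow_one, mul_comm,
      ← ENNReal.coe_rpow_of_nonneg _ hq] at this

lemma withDensity_ball_mul_le (hW : IsMuckenhouptWeight μ p K W) (hμ : IsDoubling μ D)
    (hp : 1 < p) (x : X) {r : ℝ} (hr : 0 < r) :
    μ.withDensity W (ball x r) * (∫⁻ y in ball x r, dualWeight p W y ∂μ) ^ (p - 1) ≤
      K * μ (ball x r) ^ p := by
  have hB0 := hμ.measure_ball_ne_zero x hr
  have hBtop := hμ.measure_ball_ne_top x r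
  have hp' : 0 ≤ p - 1 := (sub_pos.2 hp).le
  have hpow : μ (ball x r) ^ p = μ (ball x r) * μ (ball x r) ^ (p - 1) := by
    nth_rw 2 [← ENNReal.rpow_one (μ (ball x r))]
    rw [← ENNReal.rpow_add _ _ hB0 hBtop, add_sub_cancel]
  rw [withDensity_apply _ measurableSet_ball, ← measure_mul_setLAverage W hBtop,
    ← measure_mul_setLAverage (dualWeight p W) hBtop, ENNReal.mul_rpow_of_nonneg _ _ hp',
    mul_mul_mul_comm, ← hpow, mul_comm]
  gcongr
  exact hW.laverage_mul_laverage_dualWeight_le x hr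

lemma lintegral_rpow_mul_withDensity_ball_le (hW : IsMuckenhouptWeight μ p K W)
    (hμ : IsDoubling μ D) (hp : 1 < p) (x : X) {r : ℝ} (hr : 0 < r) {F : X → ℝ≥0∞}
    (hF : Measurable F) :
    (∫⁻ y in ball x r, F y ∂μ) ^ p * μ.withDensity W (ball x r) ≤
      K * μ (ball x r) ^ p * ∫⁻ y in ball x r, F y ^ p ∂μ.withDensity W := by
  have holder := lintegral_rpow_le_mul_lintegral_dualWeight (.conjExponent hp) hW.measurable
    (ae_restrict_of_ae hW.ae_ne_zero) (ae_restrict_of_ae (s := ball x r) hW.ae_ne_top) hF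
  rw [← restrict_withDensity measurableSet_ball] at holder
  grw [holder, ← hW.withDensity_ball_mul_le hμ hp x hr]
  exact le_of_eq (by ring)

lemma isDoubling_withDensity (hW : IsMuckenhouptWeight μ p K W) (hμ : IsDoubling μ D)
    (hp : 1 < p) : IsDoubling (μ.withDensity W) (K * D ^ p) where
  measure_ball_ne_zero x _ hr := hW.withDensity_ball_ne_zero hμ x hr
  measure_ball_ne_top := hW.withDensity_ball_ne_top
  measure_ball_two_mul_le x r hr := by
    have hp0 : 0 < p := zero_lt_one.trans hp
    have hsub : ball x r ∩ ball x (2 * r) = ball x r :=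
      inter_eq_left.2 (ball_subset_ball (by linarith))
    have hind : ∀ y, (ball x r).indicator (1 : X → ℝ≥0∞) y ^ p = (ball x r).indicator 1 y :=
      fun y => by by_cases hy : y ∈ ball x r <;> simp [hy, hp0]
    have key := hW.lintegral_rpow_mul_withDensity_ball_le hμ hp x (by positivity : 0 < 2 * r)
      (measurable_one.indicator (measurableSet_ball (x := x) (ε := r)))
    simp only [hind, lintegral_indicator_one measurableSet_ball,
      Measure.restrict_apply measurableSet_ball, hsub] at key
    have hpos : μ (ball x r) ^ p ≠ 0 := by
      simpa [ENNReal.rpow_eq_zero_iff, hp0, hp0.not_gt] using hμ.measure_ball_ne_zero x hr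
    have hfin : μ (ball x r) ^ p ≠ ∞ :=
      ENNReal.rpow_ne_top_of_nonneg hp0.le (hμ.measure_ball_ne_top x r)
    refine (ENNReal.mul_le_mul_iff_right hpos hfin).1 (key.trans ?_)
    grw [hμ.measure_ball_two_mul_le x hr, ENNReal.mul_rpow_of_nonneg _ _ hp0.le]
    rw [ENNReal.coe_mul, ENNReal.coe_rpow_of_nonneg _ hp0.le]
    exact le_of_eq (by ring)

end IsMuckenhouptWeight

end MuckenhouptWeight

section Muckenhoupt

namespace IsMuckenhouptWeight

variable {X : Type*} [PseudoMetricSpace X] [MeasurableSpace X] [OpensMeasurableSpace X]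
  {μ : Measure X} {D K : ℝ≥0} {p q : ℝ} {W F : X → ℝ≥0∞}

lemma laverage_ball_rpow_le (hW : IsMuckenhouptWeight μ p K W) (hμ : IsDoubling μ D) (hp : 1 < p)
    (hF : Measurable F) (c : X) {r : ℝ} (hr : 0 < r) :
    (⨍⁻ y in ball c r, F y ∂μ) ^ (p - 1) ≤
      K * ⨍⁻ y in ball c r,
        maximalFunction (μ.withDensity (dualWeight p W)) (fun z => F z * (dualWeight p W z)⁻¹) y ^
          (p - 1) * (W y)⁻¹ ∂μ.withDensity W := by
  have hp' : 0 ≤ p - 1 := (sub_pos.2 hp).le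
  have hσ := hW.dual hμ (.conjExponent hp)
  set σ := dualWeight p W
  set g := maximalFunction (μ.withDensity σ) fun z => F z * (σ z)⁻¹
  have hF_avg : ⨍⁻ y in ball c r, F y ∂μ =
      (⨍⁻ y in ball c r, σ y ∂μ) * ⨍⁻ y in ball c r, F y * (σ y)⁻¹ ∂μ.withDensity σ :=
    laverage_eq_mul_laverage_withDensity hσ.measurable hσ.ae_ne_zero hσ.ae_ne_top hF
      measurableSet_ball (hσ.withDensity_ball_ne_zero hμ c hr) (hσ.withDensity_ball_ne_top c r)
  have hg_avg : ⨍⁻ y in ball c r, g y ^ (p - 1) ∂μ =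
      (⨍⁻ y in ball c r, W y ∂μ) *
        ⨍⁻ y in ball c r, g y ^ (p - 1) * (W y)⁻¹ ∂μ.withDensity W :=
    laverage_eq_mul_laverage_withDensity hW.measurable hW.ae_ne_zero hW.ae_ne_top
      (by fun_prop) measurableSet_ball (hW.withDensity_ball_ne_zero hμ c hr)
      (hW.withDensity_ball_ne_top c r)
  have hle : (⨍⁻ y in ball c r, F y * (σ y)⁻¹ ∂μ.withDensity σ) ^ (p - 1) ≤
      ⨍⁻ y in ball c r, g y ^ (p - 1) ∂μ := by
    rw [setLAverage_eq (f := fun y => g y ^ (p - 1)),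
      ENNReal.le_div_iff_mul_le (.inl (hμ.measure_ball_ne_zero c hr))
        (.inl (hμ.measure_ball_ne_top c r)), ← setLIntegral_const]
    refine setLIntegral_mono (by fun_prop) fun y hy => ?_
    exact ENNReal.rpow_le_rpow (laverage_le_maximalFunction hy) hp'
  rw [hF_avg, ENNReal.mul_rpow_of_nonneg _ _ hp']
  grw [hle, hg_avg, ← hW.laverage_mul_laverage_dualWeight_le c hr]
  exact le_of_eq (by ring)

lemma maximalFunction_rpow_le (hW : IsMuckenhouptWeight μ p K W) (hμ : IsDoubling μ D)
    (hpq : p.HolderConjugate q) (hF : Measurable F) (x : X) :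
    maximalFunction μ F x ^ p ≤ K ^ q * maximalFunction (μ.withDensity W) (fun y =>
      maximalFunction (μ.withDensity (dualWeight p W)) (fun z => F z * (dualWeight p W z)⁻¹) y ^
        (p - 1) * (W y)⁻¹) x ^ q := by
  have hexp : (p - 1)⁻¹ * p = q := by rw [inv_mul_eq_div, hpq.conjugate_eq]
  rw [← ENNReal.mul_rpow_of_nonneg _ _ hpq.symm.nonneg, ← hexp, ENNReal.rpow_mul]
  refine ENNReal.rpow_le_rpow (iSup_le fun c => iSup₂_le fun r hx => ?_) hpq.nonneg
  rw [ENNReal.le_rpow_inv_iff hpq.sub_one_pos]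
  grw [hW.laverage_ball_rpow_le hμ hpq.lt hF c (pos_of_mem_ball hx),
    laverage_le_maximalFunction hx]

theorem exists_lintegral_maximalFunction_rpow_le (hW : IsMuckenhouptWeight μ p K W)
    (hμ : IsDoubling μ D) (hp : 1 < p) :
    ∃ C : ℝ≥0, ∀ F : X → ℝ≥0∞, Measurable F →
      ∫⁻ x, maximalFunction μ F x ^ p ∂μ.withDensity W ≤ C * ∫⁻ x, F x ^ p ∂μ.withDensity W := by
  obtain ⟨q, hpq⟩ : ∃ q, p.HolderConjugate q := ⟨_, .conjExponent hp⟩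
  have hσ := hW.dual hμ hpq
  have hw_doubling := hW.isDoubling_withDensity hμ hp
  have hσ_doubling := hσ.isDoubling_withDensity hμ hpq.symm.lt
  obtain ⟨C₁, hC₁⟩ := hw_doubling.exists_lintegral_maximalFunction_rpow_le hpq.symm.lt
  obtain ⟨C₂, hC₂⟩ := hσ_doubling.exists_lintegral_maximalFunction_rpow_le hp
  refine ⟨K ^ q * (C₁ * C₂), fun F hF => ?_⟩
  have hσ_meas := hσ.measurable
  have hW_meas := hW.measurable
  set σ := dualWeight p W
  set g := maximalFunction (μ.withDensity σ) fun z => F z * (σ z)⁻¹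
  calc ∫⁻ x, maximalFunction μ F x ^ p ∂μ.withDensity W
      ≤ ∫⁻ x, K ^ q * maximalFunction (μ.withDensity W) (fun y => g y ^ (p - 1) * (W y)⁻¹) x ^ q
          ∂μ.withDensity W := lintegral_mono fun x => hW.maximalFunction_rpow_le hμ hpq hF x
    _ ≤ K ^ q * (C₁ * ∫⁻ y, (g y ^ (p - 1) * (W y)⁻¹) ^ q ∂μ.withDensity W) := by
      rw [lintegral_const_mul _ (by fun_prop)]
      gcongr
      exact hC₁ _ (by fun_prop)
    _ = K ^ q * (C₁ * ∫⁻ y, g y ^ p ∂μ.withDensity σ) := by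
      rw [lintegral_mul_inv_rpow_withDensity hpq hW_meas hW.ae_ne_zero hW.ae_ne_top (by fun_prop)]
      simp only [← ENNReal.rpow_mul, hpq.sub_one_mul_conj, σ]
    _ ≤ K ^ q * (C₁ * (C₂ * ∫⁻ z, (F z * (σ z)⁻¹) ^ p ∂μ.withDensity σ)) := by
      gcongr
      exact hC₂ _ (by fun_prop)
    _ = ↑(K ^ q * (C₁ * C₂)) * ∫⁻ x, F x ^ p ∂μ.withDensity W := by
      rw [lintegral_mul_inv_rpow_withDensity hpq.symm hσ_meas hσ.ae_ne_zero hσ.ae_ne_top hF,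
        dualWeight_dualWeight hpq, ENNReal.coe_mul, ENNReal.coe_mul,
        ENNReal.coe_rpow_of_nonneg _ hpq.symm.nonneg, mul_assoc, mul_assoc]

end IsMuckenhouptWeight

end Muckenhoupt

section TailIntegral

variable {X : Type*} [PseudoMetricSpace X] [MeasurableSpace X] {μ ν : Measure X}
  {D K : ℝ≥0} {p : ℝ} {W g : X → ℝ≥0∞}

/-- The tail integral `∫_r^∞ ν(B(a,s))^{-1/p} ‖g‖_{L^p(ν, B(a,s))} ds/s`, which controls the
maximal function of `g` on `B(a,r)`. -/
noncomputable def ballTailIntegral (ν : Measure X) (p : ℝ) (g : X → ℝ≥0∞) (a : X) (r : ℝ) : ℝ≥0∞ :=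
  ∫⁻ s in Ioi r, ν (ball a s) ^ (-(1 / p)) * eLpNorm' g p (ν.restrict (ball a s)) *
    ENNReal.ofReal s⁻¹

namespace IsDoubling

lemma rpow_neg_measure_ball_le (hν : IsDoubling ν D) {β : ℝ} (hβ : 0 ≤ β) (a : X) {u s : ℝ}
    (hs : 0 < s) (hsu : s ≤ 2 * u) : ν (ball a u) ^ (-β) ≤ D ^ β * ν (ball a s) ^ (-β) := by
  have hdouble : ν (ball a s) ≤ D * ν (ball a u) :=
    (measure_mono (ball_subset_ball hsu)).trans (hν.measure_ball_two_mul_le a (by linarith))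
  have hinv : (ν (ball a u))⁻¹ ≤ D * (ν (ball a s))⁻¹ := by
    rw [← div_eq_mul_inv, ENNReal.le_div_iff_mul_le (.inl (hν.measure_ball_ne_zero a hs))
      (.inl (hν.measure_ball_ne_top a s)), mul_comm, ← div_eq_mul_inv]
    exact ENNReal.div_le_of_le_mul hdouble
  rw [ENNReal.rpow_neg, ENNReal.rpow_neg, ← ENNReal.inv_rpow, ← ENNReal.inv_rpow,
    ← ENNReal.mul_rpow_of_nonneg _ _ hβ]
  exact ENNReal.rpow_le_rpow hinv hβ

lemma rpow_neg_mul_eLpNorm'_le_ballTailIntegral (hν : IsDoubling ν D) (hp : 0 < p)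
    (g : X → ℝ≥0∞) (a : X) {r u : ℝ} (hr : 0 < r) (hru : r ≤ u) :
    ν (ball a u) ^ (-(1 / p)) * eLpNorm' g p (ν.restrict (ball a u)) ≤
      2 * D ^ (1 / p) * ballTailIntegral ν p g a r := by
  have hu : 0 < u := hr.trans_le hru
  have hlen : 2 * (ENNReal.ofReal (2 * u)⁻¹ * volume (Ioo u (2 * u))) = 1 := by
    rw [Real.volume_Ioo, ← ENNReal.ofReal_mul (by positivity), ← ENNReal.ofReal_ofNat,
      ← ENNReal.ofReal_mul (by positivity), ← ENNReal.ofReal_one]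
    congr 1
    field_simp
    ring
  calc ν (ball a u) ^ (-(1 / p)) * eLpNorm' g p (ν.restrict (ball a u))
      = 2 * ∫⁻ _ in Ioo u (2 * u), ν (ball a u) ^ (-(1 / p)) *
          eLpNorm' g p (ν.restrict (ball a u)) * ENNReal.ofReal (2 * u)⁻¹ := by
        rw [setLIntegral_const, mul_assoc (_ * _), mul_left_comm, hlen, mul_one]
    _ ≤ 2 * ∫⁻ s in Ioo u (2 * u), D ^ (1 / p) * (ν (ball a s) ^ (-(1 / p)) *
          eLpNorm' g p (ν.restrict (ball a s)) * ENNReal.ofReal s⁻¹) := by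
        gcongr 2 * ?_
        refine setLIntegral_mono' measurableSet_Ioo fun s hs => ?_
        rw [← mul_assoc, ← mul_assoc]
        have hs0 : 0 < s := hu.trans hs.1
        gcongr
        · exact hν.rpow_neg_measure_ball_le (by positivity) a hs0 hs.2.le
        · exact hs.1.le
        · exact hs.2.le
    _ ≤ 2 * (D ^ (1 / p) * ballTailIntegral ν p g a r) := by
        rw [lintegral_const_mul' _ _ (by finiteness), ballTailIntegral]
        gcongr
        exact fun s hs => hru.trans_lt hs.1
    _ = 2 * D ^ (1 / p) * ballTailIntegral ν p g a r := by rw [mul_assoc]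

lemma eLpNorm'_ball_three_mul_le (hν : IsDoubling ν D) (hp : 0 < p) (g : X → ℝ≥0∞) (a : X)
    {r : ℝ} (hr : 0 < r) :
    eLpNorm' g p (ν.restrict (ball a (3 * r))) ≤
      (D ^ 3 * ν (ball a r)) ^ (1 / p) * (2 * D ^ (1 / p) * ballTailIntegral ν p g a r) := by
  have h3r : 0 < 3 * r := by positivity
  have hB : ν (ball a (3 * r)) ≤ D ^ 3 * ν (ball a r) :=
    (measure_mono (ball_subset_ball (by linarith))).trans (hν.measure_ball_five_mul_le a hr)
  calc eLpNorm' g p (ν.restrict (ball a (3 * r)))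
      = ν (ball a (3 * r)) ^ (1 / p) *
          (ν (ball a (3 * r)) ^ (-(1 / p)) * eLpNorm' g p (ν.restrict (ball a (3 * r)))) := by
        rw [← mul_assoc, ← ENNReal.rpow_add _ _ (hν.measure_ball_ne_zero a h3r)
          (hν.measure_ball_ne_top a _), add_neg_cancel, ENNReal.rpow_zero, one_mul]
    _ ≤ _ := by
        grw [hν.rpow_neg_mul_eLpNorm'_le_ballTailIntegral hp g a hr (by linarith : r ≤ 3 * r), hB]

end IsDoubling

variable [OpensMeasurableSpace X]

namespace IsMuckenhouptWeight

lemma lintegral_ball_le (hW : IsMuckenhouptWeight μ p K W) (hμ : IsDoubling μ D) (hp : 1 < p)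
    (a : X) {r : ℝ} (hr : 0 < r) (hg : Measurable g) :
    ∫⁻ y in ball a r, g y ∂μ ≤ K ^ (1 / p) * μ (ball a r) *
      (μ.withDensity W (ball a r) ^ (-(1 / p)) *
        eLpNorm' g p ((μ.withDensity W).restrict (ball a r))) := by
  have hp0 : 0 < p := zero_lt_one.trans hp
  have hinv : 0 ≤ 1 / p := by positivity
  have hroot := ENNReal.rpow_le_rpow (hW.lintegral_rpow_mul_withDensity_ball_le hμ hp a hr hg) hinv
  simp only [ENNReal.mul_rpow_of_nonneg _ _ hinv, ← ENNReal.rpow_mul, mul_one_div_cancel hp0.ne',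
    ENNReal.rpow_one] at hroot
  have hw0 : μ.withDensity W (ball a r) ^ (1 / p) ≠ 0 := by
    simpa [ENNReal.rpow_eq_zero_iff, hp0, hp0.le, hp0.not_gt] using
      hW.withDensity_ball_ne_zero hμ a hr
  have hwtop : μ.withDensity W (ball a r) ^ (1 / p) ≠ ∞ :=
    ENNReal.rpow_ne_top_of_nonneg hinv (hW.withDensity_ball_ne_top a r)
  rw [ENNReal.rpow_neg, ← mul_assoc, mul_right_comm, ← div_eq_mul_inv]
  exact (ENNReal.le_div_iff_mul_le (.inl hw0) (.inl hwtop)).2 hroot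

lemma laverage_ball_le_mul_ballTailIntegral (hW : IsMuckenhouptWeight μ p K W)
    (hμ : IsDoubling μ D) (hp : 1 < p) (hg : Measurable g) {a c x : X} {r t : ℝ} (hr : 0 < r)
    (hx : x ∈ ball a r) (hxc : x ∈ ball c t) (hrt : r < t) :
    ⨍⁻ y in ball c t, g y ∂μ ≤ D ^ 3 * K ^ (1 / p) * (2 * ↑(K * D ^ p) ^ (1 / p)) *
      ballTailIntegral (μ.withDensity W) p g a r := by
  have hp0 : 0 < p := zero_lt_one.trans hp
  have ht : 0 < t := hr.trans hrt
  have hca : dist c a < 2 * t := by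
    linarith [dist_triangle_left c a x, mem_ball.1 hx, mem_ball.1 hxc]
  have hsub : ball c t ⊆ ball a (3 * t) := ball_subset_ball' (by linarith)
  have hsub' : ball a (3 * t) ⊆ ball c (5 * t) :=
    ball_subset_ball' (by rw [dist_comm]; linarith)
  rw [setLAverage_eq, ENNReal.div_le_iff (hμ.measure_ball_ne_zero c ht)
    (hμ.measure_ball_ne_top c t)]
  grw [hsub, hW.lintegral_ball_le hμ hp a (by positivity) hg,
    (hW.isDoubling_withDensity hμ hp).rpow_neg_mul_eLpNorm'_le_ballTailIntegral hp0 g a hr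
      (by linarith : r ≤ 3 * t), hsub', hμ.measure_ball_five_mul_le c ht]
  exact le_of_eq (by ring)

lemma maximalFunction_le_indicator_add (hW : IsMuckenhouptWeight μ p K W) (hμ : IsDoubling μ D)
    (hp : 1 < p) (hg : Measurable g) {a x : X} {r : ℝ} (hr : 0 < r) (hx : x ∈ ball a r) :
    maximalFunction μ g x ≤ maximalFunction μ ((ball a (3 * r)).indicator g) x +
      D ^ 3 * K ^ (1 / p) * (2 * ↑(K * D ^ p) ^ (1 / p)) *
        ballTailIntegral (μ.withDensity W) p g a r := by
  refine iSup_le fun c => iSup₂_le fun t hxc => ?_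
  rcases le_or_gt t r with htr | hrt
  · have hsub : ball c t ⊆ ball a (3 * r) := ball_subset_ball' <| by
      linarith [dist_triangle_left c a x, mem_ball.1 hx, mem_ball.1 hxc]
    have hlocal : ⨍⁻ y in ball c t, g y ∂μ = ⨍⁻ y in ball c t, (ball a (3 * r)).indicator g y ∂μ :=
      laverage_congr <| (ae_restrict_mem measurableSet_ball).mono fun y hy =>
        (indicator_of_mem (hsub hy) g).symm
    rw [hlocal]
    exact (laverage_le_maximalFunction hxc).trans le_self_add
  · exact (hW.laverage_ball_le_mul_ballTailIntegral hμ hp hg hr hx hxc hrt).trans le_add_self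

lemma exists_eLpNorm'_maximalFunction_indicator_le (hW : IsMuckenhouptWeight μ p K W)
    (hμ : IsDoubling μ D) (hp : 1 < p) :
    ∃ C : ℝ≥0, ∀ (g : X → ℝ≥0∞) (s : Set X), Measurable g → MeasurableSet s →
      eLpNorm' (maximalFunction μ (s.indicator g)) p (μ.withDensity W) ≤
        C * eLpNorm' g p ((μ.withDensity W).restrict s) := by
  obtain ⟨C, hC⟩ := hW.exists_lintegral_maximalFunction_rpow_le hμ hp
  have hp0 : 0 < p := zero_lt_one.trans hp
  refine ⟨C ^ (1 / p), fun g s hg hs => ?_⟩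
  have hind : ∀ x, s.indicator g x ^ p = s.indicator (fun y => g y ^ p) x := fun x =>
    (congrFun (indicator_comp_of_zero (g := (· ^ p)) (ENNReal.zero_rpow_of_pos hp0)) x).symm
  have := ENNReal.rpow_le_rpow (hC _ (hg.indicator hs)) (by positivity : 0 ≤ 1 / p)
  simp only [hind, lintegral_indicator hs] at this
  rwa [ENNReal.mul_rpow_of_nonneg _ _ (by positivity),
    ← ENNReal.coe_rpow_of_nonneg _ (by positivity)] at this

end IsMuckenhouptWeight

theorem statement8_general (hμ : IsDoubling μ D) (hp : 1 < p) (hW : IsMuckenhouptWeight μ p K W) :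
    ∃ C : ℝ≥0, ∀ (a : X) (r : ℝ) (g : X → ℝ≥0∞), 0 < r → Measurable g →
      eLpNorm' (maximalFunction μ g) p ((μ.withDensity W).restrict (ball a r)) ≤
        C * μ.withDensity W (ball a r) ^ (1 / p) *
          ballTailIntegral (μ.withDensity W) p g a r := by
  obtain ⟨C, hC⟩ := hW.exists_eLpNorm'_maximalFunction_indicator_le hμ hp
  have hp0 : 0 < p := zero_lt_one.trans hp
  have hinv : 0 ≤ 1 / p := by positivity
  have hw := hW.isDoubling_withDensity hμ hp
  set w := μ.withDensity W
  set Dw := K * D ^ p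
  set A : ℝ≥0 := D ^ 3 * K ^ (1 / p) * (2 * Dw ^ (1 / p)) with hA
  have hA_coe : (A : ℝ≥0∞) = D ^ 3 * K ^ (1 / p) * (2 * Dw ^ (1 / p)) := by
    push_cast [hA, ENNReal.coe_rpow_of_nonneg _ hinv]
    rfl
  refine ⟨C * ((Dw ^ 3) ^ (1 / p) * (2 * Dw ^ (1 / p))) + A, fun a r g hr hg => ?_⟩
  set T := ballTailIntegral w p g a r
  calc eLpNorm' (maximalFunction μ g) p (w.restrict (ball a r))
      ≤ eLpNorm' (maximalFunction μ ((ball a (3 * r)).indicator g) + fun _ => A * T) p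
          (w.restrict (ball a r)) :=
        eLpNorm'_mono_enorm_ae hp0.le <| (ae_restrict_mem measurableSet_ball).mono fun x hx => by
          rw [hA_coe]
          exact hW.maximalFunction_le_indicator_add hμ hp hg hr hx
    _ ≤ eLpNorm' (maximalFunction μ ((ball a (3 * r)).indicator g)) p w +
          A * T * w (ball a r) ^ (1 / p) := by
        grw [eLpNorm'_add_le (measurable_maximalFunction _ _).aestronglyMeasurable
          aestronglyMeasurable_const hp.le,
          eLpNorm'_const _ hp0, Measure.restrict_apply_univ,
          eLpNorm'_mono_measure _ Measure.restrict_le_self hp0.le]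
        rfl
    _ ≤ C * ((Dw ^ 3 * w (ball a r)) ^ (1 / p) * (2 * Dw ^ (1 / p) * T)) +
          A * T * w (ball a r) ^ (1 / p) := by
        grw [hC g _ hg measurableSet_ball, hw.eLpNorm'_ball_three_mul_le hp0 g a hr]
    _ = _ := by
        rw [ENNReal.mul_rpow_of_nonneg _ _ hinv]
        push_cast [ENNReal.coe_rpow_of_nonneg _ hinv]
        ring

end TailIntegral

section Lebesgue

lemma isDoubling_addHaar {E : Type*} [NormedAddCommGroup E] [NormedSpace ℝ E]
    [FiniteDimensional ℝ E] [MeasurableSpace E] [BorelSpace E] (μ : Measure E)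
    [μ.IsAddHaarMeasure] : IsDoubling μ (2 ^ Module.finrank ℝ E) where
  measure_ball_ne_zero x _ hr := (measure_ball_pos μ x hr).ne'
  measure_ball_ne_top _ _ := measure_ball_lt_top.ne
  measure_ball_two_mul_le x r _ := by
    rw [Measure.addHaar_ball_mul_of_pos μ x two_pos, μ.addHaar_ball_center x,
      ENNReal.ofReal_pow two_pos.le, ENNReal.ofReal_ofNat]
    norm_cast

variable {n : ℕ} {p : ℝ} {w : EuclideanSpace ℝ (Fin n) → ℝ}

lemma MuckAp.exists_isMuckenhouptWeight (hAp : MuckAp p w) (hw : IsWeight w) :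
    ∃ K : ℝ≥0, IsMuckenhouptWeight volume p K fun x => ENNReal.ofReal (w x) := by
  obtain ⟨hw_meas, -, hw_loc, hw_pos⟩ := hw
  obtain ⟨C, -, hC⟩ := hAp
  refine ⟨C.toNNReal, hw_meas.ennreal_ofReal, hw_pos.mono fun x hx => by simpa using hx,
    fun x r => ?_, fun x r hr => ?_⟩
  · exact ((hw_loc.integrableOn_isCompact (isCompact_closedBall x r)).mono_set
      ball_subset_closedBall).lintegral_lt_top.ne
  · have hdual : ∫⁻ y in ball x r, dualWeight p (fun z => ENNReal.ofReal (w z)) y =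
        ∫⁻ y in ball x r, ENNReal.ofReal (w y ^ (-(1 / (p - 1)))) :=
      lintegral_congr_ae <| ae_restrict_of_ae <| hw_pos.mono fun y hy =>
        ENNReal.ofReal_rpow_of_pos hy
    rw [setLAverage_eq, setLAverage_eq, hdual, ENNReal.div_eq_inv_mul, ENNReal.div_eq_inv_mul]
    exact hC x r hr

lemma wSet_eq_withDensity {s : Set (EuclideanSpace ℝ (Fin n))} :
    wSet w s = volume.withDensity (fun x => ENNReal.ofReal (w x)) s :=
  (withDensity_apply' _ s).symm

lemma wLp_eq_eLpNorm' (hw : Measurable w) {f : EuclideanSpace ℝ (Fin n) → ℝ} (hf : Measurable f)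
    {s : Set (EuclideanSpace ℝ (Fin n))} (hs : MeasurableSet s) :
    wLp p w f s = eLpNorm' (fun x => ‖f x‖ₑ) p
      ((volume.withDensity fun x => ENNReal.ofReal (w x)).restrict s) := by
  rw [wLp, eLpNorm', setLIntegral_withDensity_eq_setLIntegral_mul _ (by fun_prop) (by fun_prop) hs]
  simp only [Pi.mul_apply, enorm_eq_self, Real.enorm_eq_ofReal_abs, mul_comm]

lemma HLMax_le_maximalFunction (f : EuclideanSpace ℝ (Fin n) → ℝ) (x : EuclideanSpace ℝ (Fin n)) :
    HLMax f x ≤ maximalFunction volume (fun y => ‖f y‖ₑ) x := by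
  refine iSup_le fun r => ?_
  simp only [← Real.enorm_eq_ofReal_abs]
  rw [← ENNReal.div_eq_inv_mul, ← setLAverage_eq]
  exact laverage_le_maximalFunction (mem_ball_self r.2)

lemma wLpE_HLMax_le_eLpNorm' (hp : 0 ≤ p) (hw : Measurable w)
    (f : EuclideanSpace ℝ (Fin n) → ℝ) {s : Set (EuclideanSpace ℝ (Fin n))}
    (hs : MeasurableSet s) :
    wLpE p w (HLMax f) s ≤ eLpNorm' (maximalFunction volume fun x => ‖f x‖ₑ) p
      ((volume.withDensity fun x => ENNReal.ofReal (w x)).restrict s) := by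
  simp only [wLpE, eLpNorm', enorm_eq_self]
  rw [setLIntegral_withDensity_eq_setLIntegral_mul _ (by fun_prop) (by fun_prop) hs]
  refine ENNReal.rpow_le_rpow (lintegral_mono fun x => ?_) (by positivity)
  rw [mul_comm]
  exact mul_le_mul_right (ENNReal.rpow_le_rpow (HLMax_le_maximalFunction f x) hp) _

end Lebesgue

/-- Let `1 < p < ∞` and `w ∈ A_p`. Then there is `C > 0`, independent of
`f`, `a`, `r`, such that for every `a ∈ ℝⁿ`, `r > 0` and `f ∈ L^{p,w}_loc`:
`‖Mf‖_{L^{p,w}(B(a,r))} ≤ C·w(B(a,r))^{1/p}·∫_r^∞ w(B(a,s))^{-1/p}‖f‖_{L^{p,w}(B(a,s))} ds/s`. -/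
theorem statement8 {n : ℕ} (p : ℝ) (hp : 1 < p)
    (w : EuclideanSpace ℝ (Fin n) → ℝ) (hw : IsWeight w) (hAp : MuckAp p w) :
    ∃ C : ℝ, 0 < C ∧
      ∀ (a : EuclideanSpace ℝ (Fin n)) (r : ℝ) (f : EuclideanSpace ℝ (Fin n) → ℝ),
        0 < r → MemLocWLp p w f →
        wLpE p w (HLMax f) (ball a r) ≤
          ENNReal.ofReal C * wSet w (ball a r) ^ (1 / p) *
            ∫⁻ s in Set.Ioi r,
              wSet w (ball a s) ^ (-(1 / p)) * wLp p w f (ball a s) *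
                ENNReal.ofReal s⁻¹ := by
  obtain ⟨K, hK⟩ := hAp.exists_isMuckenhouptWeight hw
  obtain ⟨C, hC⟩ := statement8_general (isDoubling_addHaar volume) hp hK
  refine ⟨C + 1, by positivity, fun a r f hr hf => ?_⟩
  have hC_le : (C : ℝ≥0∞) ≤ ENNReal.ofReal (C + 1) := by
    rw [← ENNReal.ofReal_coe_nnreal]
    exact ENNReal.ofReal_le_ofReal (by linarith)
  simp only [wLp_eq_eLpNorm' hw.1 hf.1 measurableSet_ball, wSet_eq_withDensity]
  grw [wLpE_HLMax_le_eLpNorm' (by positivity) hw.1 f measurableSet_ball,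
    hC a r _ hr hf.1.enorm, hC_le, ballTailIntegral]
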